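/- arXiv:1810.05795 — 3 statements merged into one kernel-verified Lean document; each statement's English description precedes it below -/
import Mathlib

section
/- Let w, W_U, W_L, ε₁, ε₂ be real numbers with w > 0, 0 < ε₁ < ε₂, ε₁ > ε₂/3, and suppose (1+ε₁)·w ≤ W_U ≤ (1+ε₂)·w and (1−ε₂)·w ≤ W_L ≤ (1−ε₁)·w. Then there exists λ ∈ (0,1) such that |((1−λ)·W_U + λ·W_L) − w| < min(|W_U − w|, |W_L − w|). -/
theorem sandwich_exists_better
    (w W_U W_L ε₁ ε₂ : ℝ)
    (hw : 0 < w) (hε₁ : 0 < ε₁) (hε : ε₁ < ε₂) (hε₃ : ε₁ > ε₂ / 3)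
    (hU₁ : (1 + ε₁) * w ≤ W_U) (hU₂ : W_U ≤ (1 + ε₂) * w)
    (hL₁ : (1 - ε₂) * w ≤ W_L) (hL₂ : W_L ≤ (1 - ε₁) * w) :
    ∃ lam : ℝ, 0 < lam ∧ lam < 1 ∧
      |((1 - lam) * W_U + lam * W_L) - w| < min |W_U - w| |W_L - w| := by
  -- With a = W_U - w and b = w - W_L, both in [ε₁ w, ε₂ w], the midpoint has error |a - b| / 2,
  -- which is below min a b because ε₂ < 3 ε₁ forces a < 3 b and b < 3 a.
  have h₁ : 0 < ε₁ * w := mul_pos hε₁ hw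
  have h₃ : ε₂ * w < 3 * ε₁ * w := mul_lt_mul_of_pos_right (by linarith) hw
  refine ⟨1 / 2, by norm_num, by norm_num, ?_⟩
  rw [abs_of_pos (show 0 < W_U - w by linarith), abs_of_neg (show W_L - w < 0 by linarith)]
  exact lt_min (abs_lt.mpr ⟨by linarith, by linarith⟩) (abs_lt.mpr ⟨by linarith, by linarith⟩)
end

section
/- Let w, W_U, W_L, ε₁, ε₂ be real numbers with w > 0, 0 < ε₁ < ε₂, and suppose (1+ε₁)·w ≤ W_U ≤ (1+ε₂)·w and (1−ε₂)·w ≤ W_L ≤ (1−ε₁)·w. Then for every λ with (ε₂−ε₁)/(ε₂+ε₁) < λ < 1/2, one has |((1−λ)·W_U + λ·W_L) − w| < ε₁·w. -/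
/-!
Mixing the two-sided bounds on `W_U` and `W_L` places the relative error of the mixture between
`(1 - lam) * ε₁ - lam * ε₂` and `(1 - lam) * ε₂ - lam * ε₁`. The upper end is below `ε₁` exactly
when `lam > (ε₂ - ε₁) / (ε₂ + ε₁)`. The lower end is above `-ε₁` exactly when
`lam * (ε₁ + ε₂) < 2 * ε₁`; this follows from `lam < 1 / 2` because a nonempty range for `lam`
forces `ε₂ < 3 * ε₁`.
-/

theorem sandwich_error_lt
    (w W_U W_L ε₁ ε₂ : ℝ)
    (hw : 0 < w) (hε₁ : 0 < ε₁) (hε : ε₁ < ε₂)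
    (hU₁ : (1 + ε₁) * w ≤ W_U) (hU₂ : W_U ≤ (1 + ε₂) * w)
    (hL₁ : (1 - ε₂) * w ≤ W_L) (hL₂ : W_L ≤ (1 - ε₁) * w) :
    ∀ lam : ℝ, (ε₂ - ε₁) / (ε₂ + ε₁) < lam → lam < 1 / 2 →
      |((1 - lam) * W_U + lam * W_L) - w| < ε₁ * w := by
  intro lam h1 h2
  have hs : 0 < ε₂ + ε₁ := by linarith
  have hlam : 0 < lam := (div_pos (sub_pos.2 hε) hs).trans h1
  have hlam' : 0 < 1 - lam := by linarith
  have hup : ε₂ - ε₁ < lam * (ε₂ + ε₁) := (div_lt_iff₀ hs).1 h1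
  have hhalf : lam * (ε₂ + ε₁) < 1 / 2 * (ε₂ + ε₁) := mul_lt_mul_of_pos_right h2 hs
  -- `hup` and `hhalf` together give `ε₂ < 3 * ε₁`.
  have hlow : lam * (ε₂ + ε₁) < 2 * ε₁ := by linarith
  have a1 := mul_le_mul_of_nonneg_left hU₁ hlam'.le
  have a2 := mul_le_mul_of_nonneg_left hU₂ hlam'.le
  have b1 := mul_le_mul_of_nonneg_left hL₁ hlam.le
  have b2 := mul_le_mul_of_nonneg_left hL₂ hlam.le
  have c1 := mul_lt_mul_of_pos_right hup hw
  have c2 := mul_lt_mul_of_pos_right hlow hw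
  rw [abs_lt]
  constructor <;> linarith
end

section
/- Let w, W_U, W_L, ε₁, ε₂ be real numbers with w > 0, 0 < ε₁ < ε₂, and suppose (1+ε₁)·w ≤ W_U ≤ (1+ε₂)·w and (1−ε₂)·w ≤ W_L ≤ (1−ε₁)·w. Then for every λ ∈ [0,1], |((1−λ)·W_U + λ·W_L) − w| ≤ (max(1−λ, λ)·ε₂ − min(1−λ, λ)·ε₁)·w. -/
/-!
Weighting the two sandwiches by `1 - lam` and `lam` puts the error in the interval from
`-(lam * ε₂ - (1 - lam) * ε₁) * w` to `((1 - lam) * ε₂ - lam * ε₁) * w`. The two radii differ by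
`(1 - 2 * lam) * (ε₁ + ε₂) * w`, so the larger one is the one that gives `ε₂` the larger weight,
which is the claimed bound.
-/

theorem sandwich_error_bound_general
    (w W_U W_L ε₁ ε₂ : ℝ)
    (hw : 0 < w) (hε₁ : 0 < ε₁) (hε : ε₁ < ε₂)
    (hU₁ : (1 + ε₁) * w ≤ W_U) (hU₂ : W_U ≤ (1 + ε₂) * w)
    (hL₁ : (1 - ε₂) * w ≤ W_L) (hL₂ : W_L ≤ (1 - ε₁) * w) :
    ∀ lam : ℝ, 0 ≤ lam → lam ≤ 1 →
      |((1 - lam) * W_U + lam * W_L) - w| ≤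
        (max (1 - lam) lam * ε₂ - min (1 - lam) lam * ε₁) * w := by
  intro lam h0 h1
  have h1' : 0 ≤ 1 - lam := sub_nonneg.2 h1
  have a1 := mul_le_mul_of_nonneg_left hU₁ h1'
  have a2 := mul_le_mul_of_nonneg_left hU₂ h1'
  have b1 := mul_le_mul_of_nonneg_left hL₁ h0
  have b2 := mul_le_mul_of_nonneg_left hL₂ h0
  have hs : 0 ≤ (ε₁ + ε₂) * w := mul_nonneg (by linarith) hw.le
  rw [abs_le]
  rcases le_total (1 - lam) lam with h | h
  · rw [max_eq_right h, min_eq_left h]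
    have hd := mul_nonneg (sub_nonneg.2 h) hs
    constructor <;> linarith
  · rw [max_eq_left h, min_eq_right h]
    have hd := mul_nonneg (sub_nonneg.2 h) hs
    constructor <;> linarith
end
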